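/- Key drift bound in the proof of Theorem 1: suppose ε ∈ (0, 1/2) and (q_1,…,q_N) is a probability vector with q_i > 0 for all i such that ρ_k = (1 − 2ε) φ̂_k Σ_{i: k ∈ S_i} q_i for all k. Then for all states x ∈ ℕ^K except finitely many, G(x) ≤ −ε Σ_{i=1}^N q_i log w̃_i(x). -/

import Mathlib

open scoped BigOperators

namespace FlowCSMA

/-- A set of links is a feasible schedule if its links are pairwise non-conflicting. -/
def Feasible {K : ℕ} (conflict : Fin K → Fin K → Prop) (S : Finset (Fin K)) : Prop :=
  ∀ k ∈ S, ∀ l ∈ S, k ≠ l → ¬ conflict k l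

/-- Weight of schedule `i` in state `x`:  `w_i(x) = ∏_{k ∈ S_i} α_k x_k`
(equal to 1 for the empty schedule). -/
noncomputable def schedWeight {K N : ℕ} (Sched : Fin N → Finset (Fin K)) (α : Fin K → ℝ)
    (x : Fin K → ℕ) (i : Fin N) : ℝ :=
  ∏ k ∈ Sched i, α k * (x k : ℝ)

/-- Selection probability of schedule `i` in state `x`. -/
noncomputable def schedProb {K N : ℕ} (Sched : Fin N → Finset (Fin K)) (α : Fin K → ℝ)
    (x : Fin K → ℕ) (i : Fin N) : ℝ :=
  schedWeight Sched α x i / ∑ j, schedWeight Sched α x j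

/-- Throughput of link `k` in state `x`: `φ_k(x) = φ̂_k ∑_{i : k ∈ S_i} p_i(x)`. -/
noncomputable def throughput {K N : ℕ} (Sched : Fin N → Finset (Fin K)) (α φhat : Fin K → ℝ)
    (x : Fin K → ℕ) (k : Fin K) : ℝ :=
  φhat k * ∑ i ∈ Finset.univ.filter (fun i => k ∈ Sched i), schedProb Sched α x i

/-- Restricted schedule weight `w̃_i(x) = ∏_{k ∈ S_i, x_k > 0} α_k x_k`
(with the empty product equal to 1). -/
noncomputable def restWeight {K N : ℕ} (Sched : Fin N → Finset (Fin K)) (α : Fin K → ℝ)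
    (x : Fin K → ℕ) (i : Fin N) : ℝ :=
  ∏ k ∈ (Sched i).filter (fun k => 0 < x k), α k * (x k : ℝ)

/-- `G(x) = ∑_{k : x_k > 0} ((ρ_k - φ_k(x))/φ̂_k) log(α_k x_k)`. -/
noncomputable def G {K N : ℕ} (Sched : Fin N → Finset (Fin K)) (α φhat ρ : Fin K → ℝ)
    (x : Fin K → ℕ) : ℝ :=
  ∑ k ∈ Finset.univ.filter (fun k => 0 < x k),
    ((ρ k - throughput Sched α φhat x k) / φhat k) * Real.log (α k * (x k : ℝ))

/-!
Exchanging the sums over links and schedules gives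
`G(x) = (1 - 2ε) ∑ i, q_i log w̃_i(x) - ∑ i, p_i(x) log w̃_i(x)`.
Let `Z(x)` be the total weight. The restriction of a schedule to the links with `x_k > 0` is again a
schedule, so `w̃_i(x) ≤ Z(x)` and `∑ i, q_i log w̃_i(x) ≤ log Z(x)`. On the other hand `p(x)` is a
Gibbs distribution, of entropy at most `log N`, so `∑ i, p_i(x) log w̃_i(x) ≥ log Z(x) - log N`.
Hence the claim holds as soon as `ε log Z(x) ≥ log N`, and `Z(x) → ∞` along the cofinite filter.
-/

open Filter Finset

lemma sum_mul_log_sum_div_card_le_sum_mul_log {ι : Type*} (s : Finset ι) {w : ι → ℝ}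
    (hw : ∀ i ∈ s, 0 ≤ w i) :
    (∑ i ∈ s, w i) * Real.log ((∑ i ∈ s, w i) / #s) ≤ ∑ i ∈ s, w i * Real.log (w i) := by
  rcases s.eq_empty_or_nonempty with rfl | hs
  · simp
  have hcard : (0 : ℝ) < #s := by exact_mod_cast hs.card_pos
  have jensen := Real.convexOn_mul_log.map_sum_le (t := s) (w := fun _ ↦ (#s : ℝ)⁻¹) (p := w)
    (fun _ _ ↦ by positivity) (by simp [hcard.ne']) hw
  simp only [smul_eq_mul, ← div_eq_inv_mul, ← sum_div] at jensen
  rwa [div_mul_eq_mul_div, div_le_div_iff_of_pos_right hcard] at jensen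

lemma Feasible.mono {K : ℕ} {conflict : Fin K → Fin K → Prop} {S T : Finset (Fin K)}
    (hS : Feasible conflict S) (hTS : T ⊆ S) : Feasible conflict T :=
  fun k hk l hl ↦ hS k (hTS hk) l (hTS hl)

lemma feasible_singleton {K : ℕ} (conflict : Fin K → Fin K → Prop) (k : Fin K) :
    Feasible conflict {k} := by
  intro i hi j hj hij
  exact absurd ((mem_singleton.1 hi).trans (mem_singleton.1 hj).symm) hij

/-- The normalizing constant `Z(x) = ∑ j, w_j(x)` of the selection probabilities. -/
noncomputable def partitionFunction {K N : ℕ} (Sched : Fin N → Finset (Fin K)) (α : Fin K → ℝ)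
    (x : Fin K → ℕ) : ℝ :=
  ∑ j, schedWeight Sched α x j

section Weights

variable {K N : ℕ} {Sched : Fin N → Finset (Fin K)} {α : Fin K → ℝ}

lemma isLowerSet_range_of_feasible {conflict : Fin K → Fin K → Prop}
    (hfeas : ∀ i, Feasible conflict (Sched i))
    (hsurj : ∀ S, Feasible conflict S → ∃ i, Sched i = S) : IsLowerSet (Set.range Sched) := by
  rintro _ T hT ⟨i, rfl⟩
  exact hsurj T ((hfeas i).mono hT)

lemma schedWeight_nonneg (hα : ∀ k, 0 ≤ α k) (x : Fin K → ℕ) (i : Fin N) :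
    0 ≤ schedWeight Sched α x i :=
  prod_nonneg fun k _ ↦ mul_nonneg (hα k) (Nat.cast_nonneg _)

lemma schedWeight_le_partitionFunction (hα : ∀ k, 0 ≤ α k) (x : Fin K → ℕ) (i : Fin N) :
    schedWeight Sched α x i ≤ partitionFunction Sched α x :=
  single_le_sum (fun j _ ↦ schedWeight_nonneg hα x j) (mem_univ i)

lemma restWeight_pos (hα : ∀ k, 0 < α k) (x : Fin K → ℕ) (i : Fin N) :
    0 < restWeight Sched α x i :=
  prod_pos fun k hk ↦ mul_pos (hα k) (Nat.cast_pos.2 (mem_filter.1 hk).2)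

lemma restWeight_le_partitionFunction (hlower : IsLowerSet (Set.range Sched))
    (hα : ∀ k, 0 ≤ α k) (x : Fin K → ℕ) (i : Fin N) :
    restWeight Sched α x i ≤ partitionFunction Sched α x := by
  obtain ⟨j, hj⟩ := hlower (filter_subset (fun k ↦ 0 < x k) (Sched i)) ⟨i, rfl⟩
  have hrest : restWeight Sched α x i = schedWeight Sched α x j := by
    rw [restWeight, schedWeight, hj]
  exact hrest.trans_le (schedWeight_le_partitionFunction hα x j)

lemma restWeight_eq_schedWeight {x : Fin K → ℕ} {i : Fin N} (hw : schedWeight Sched α x i ≠ 0) :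
    restWeight Sched α x i = schedWeight Sched α x i := by
  have hpos : ∀ k ∈ Sched i, 0 < x k := fun k hk ↦ by
    have hfactor : α k * (x k : ℝ) ≠ 0 := prod_ne_zero_iff.1 hw k hk
    exact Nat.pos_of_ne_zero (Nat.cast_ne_zero.1 (right_ne_zero_of_mul hfactor))
  rw [restWeight, schedWeight, filter_true_of_mem hpos]

lemma schedWeight_mul_log_restWeight (x : Fin K → ℕ) (i : Fin N) :
    schedWeight Sched α x i * Real.log (restWeight Sched α x i)
      = schedWeight Sched α x i * Real.log (schedWeight Sched α x i) := by
  by_cases hw : schedWeight Sched α x i = 0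
  · simp [hw]
  · rw [restWeight_eq_schedWeight hw]

lemma mul_le_partitionFunction (hlower : IsLowerSet (Set.range Sched))
    (hcover : ∀ k, ∃ i, k ∈ Sched i) (hα : ∀ k, 0 ≤ α k) (x : Fin K → ℕ) (k : Fin K) :
    α k * x k ≤ partitionFunction Sched α x := by
  obtain ⟨i, hi⟩ := hcover k
  obtain ⟨j, hj⟩ := hlower (singleton_subset_iff.2 hi) ⟨i, rfl⟩
  simpa [schedWeight, hj] using schedWeight_le_partitionFunction (Sched := Sched) hα x j

lemma tendsto_partitionFunction_cofinite_atTop (hlower : IsLowerSet (Set.range Sched))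
    (hcover : ∀ k, ∃ i, k ∈ Sched i) (hα : ∀ k, 0 < α k) :
    Tendsto (partitionFunction Sched α) cofinite atTop := by
  refine tendsto_atTop.2 fun b ↦ ?_
  refine (Set.finite_Iic fun k ↦ ⌈b / α k⌉₊).subset fun x hx k ↦ ?_
  have hZb : partitionFunction Sched α x < b := by simpa using hx
  have hxb : α k * x k ≤ b :=
    (mul_le_partitionFunction hlower hcover (fun k ↦ (hα k).le) x k).trans hZb.le
  have hdiv : (x k : ℝ) ≤ b / α k := (le_div_iff₀' (hα k)).2 hxb
  exact_mod_cast hdiv.trans (Nat.le_ceil _)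

lemma log_restWeight (hα : ∀ k, α k ≠ 0) (x : Fin K → ℕ) (i : Fin N) :
    Real.log (restWeight Sched α x i) = ∑ k ∈ Sched i with 0 < x k, Real.log (α k * x k) :=
  Real.log_prod fun k hk ↦
    mul_ne_zero (hα k) (Nat.cast_ne_zero.2 (mem_filter.1 hk).2.ne')

lemma sum_mul_log_restWeight (hα : ∀ k, α k ≠ 0) (x : Fin K → ℕ) (c : Fin N → ℝ) :
    ∑ i, c i * Real.log (restWeight Sched α x i)
      = ∑ k with 0 < x k, (∑ i with k ∈ Sched i, c i) * Real.log (α k * x k) := by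
  simp_rw [log_restWeight hα, mul_sum, sum_mul]
  exact sum_comm' fun i k ↦ by simp

lemma G_eq_sum_mul_log_restWeight_sub {φhat ρ : Fin K → ℝ} {c : Fin N → ℝ}
    (hα : ∀ k, α k ≠ 0) (hφ : ∀ k, φhat k ≠ 0)
    (hρ : ∀ k, ρ k = φhat k * ∑ i with k ∈ Sched i, c i) (x : Fin K → ℕ) :
    G Sched α φhat ρ x
      = ∑ i, c i * Real.log (restWeight Sched α x i)
        - ∑ i, schedProb Sched α x i * Real.log (restWeight Sched α x i) := by
  rw [sum_mul_log_restWeight hα, sum_mul_log_restWeight hα, ← sum_sub_distrib, G]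
  refine sum_congr rfl fun k _ ↦ ?_
  rw [hρ, throughput, ← mul_sub, mul_div_cancel_left₀ _ (hφ k), sub_mul]

lemma sum_mul_log_restWeight_le_log_partitionFunction (hlower : IsLowerSet (Set.range Sched))
    (hα : ∀ k, 0 < α k) {q : Fin N → ℝ} (hq : ∀ i, 0 ≤ q i) (hq1 : ∑ i, q i = 1)
    (x : Fin K → ℕ) :
    ∑ i, q i * Real.log (restWeight Sched α x i) ≤ Real.log (partitionFunction Sched α x) :=
  calc ∑ i, q i * Real.log (restWeight Sched α x i)
      ≤ ∑ i, q i * Real.log (partitionFunction Sched α x) := by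
        gcongr with i
        · exact hq i
        · exact restWeight_pos hα x i
        · exact restWeight_le_partitionFunction hlower (fun k ↦ (hα k).le) x i
    _ = Real.log (partitionFunction Sched α x) := by rw [← sum_mul, hq1, one_mul]

lemma log_partitionFunction_div_le_sum_schedProb_mul_log_restWeight (hα : ∀ k, 0 ≤ α k)
    {x : Fin K → ℕ} (hZ : 0 < partitionFunction Sched α x) :
    Real.log (partitionFunction Sched α x / N)
      ≤ ∑ i, schedProb Sched α x i * Real.log (restWeight Sched α x i) := by
  have hsum : ∑ i, schedProb Sched α x i * Real.log (restWeight Sched α x i)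
      = (∑ i, schedWeight Sched α x i * Real.log (schedWeight Sched α x i))
        / partitionFunction Sched α x := by
    simp_rw [sum_div, ← schedWeight_mul_log_restWeight, schedProb, partitionFunction,
      mul_div_right_comm]
  rw [hsum, le_div_iff₀' hZ]
  simpa [partitionFunction] using sum_mul_log_sum_div_card_le_sum_mul_log univ
    fun i _ ↦ schedWeight_nonneg (Sched := Sched) hα x i

theorem key_drift_bound_general (hlower : IsLowerSet (Set.range Sched))
    (hcover : ∀ k, ∃ i, k ∈ Sched i) (hα : ∀ k, 0 < α k) {φhat : Fin K → ℝ}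
    (hφ : ∀ k, φhat k ≠ 0) {ε : ℝ} (hε0 : 0 < ε) (hε1 : ε ≤ 1) {q : Fin N → ℝ}
    (hq : ∀ i, 0 ≤ q i) (hq1 : ∑ i, q i = 1) {ρ : Fin K → ℝ}
    (hrep : ∀ k, ρ k = (1 - 2 * ε) * φhat k * ∑ i with k ∈ Sched i, q i) :
    ∀ᶠ x in cofinite,
      G Sched α φhat ρ x ≤ -ε * ∑ i, q i * Real.log (restWeight Sched α x i) := by
  have hZ := tendsto_partitionFunction_cofinite_atTop hlower hcover hα
  filter_upwards [hZ.eventually_gt_atTop 0,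
    (Real.tendsto_log_atTop.comp hZ).eventually_ge_atTop (Real.log N / ε)] with x hZpos hlogZ
  have hlogN : Real.log N ≤ ε * Real.log (partitionFunction Sched α x) :=
    (div_le_iff₀' hε0).1 hlogZ
  have hN : (N : ℝ) ≠ 0 := Nat.cast_ne_zero.2 <| by
    rintro rfl
    simp at hq1
  have hG := G_eq_sum_mul_log_restWeight_sub (Sched := Sched) (ρ := ρ)
    (c := fun i ↦ (1 - 2 * ε) * q i) (fun k ↦ (hα k).ne') hφ
    (fun k ↦ by rw [hrep, ← mul_sum]; ring) x
  simp only [mul_assoc, ← mul_sum] at hG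
  have hp := log_partitionFunction_div_le_sum_schedProb_mul_log_restWeight
    (fun k ↦ (hα k).le) hZpos
  rw [Real.log_div hZpos.ne' hN] at hp
  have hqZ := sum_mul_log_restWeight_le_log_partitionFunction hlower hα hq hq1 x
  set Q := ∑ i, q i * Real.log (restWeight Sched α x i)
  set P := ∑ i, schedProb Sched α x i * Real.log (restWeight Sched α x i)
  set Z := partitionFunction Sched α x
  calc G Sched α φhat ρ x = (1 - ε) * Q - P - ε * Q := by rw [hG]; ring
    _ ≤ (1 - ε) * Real.log Z - (Real.log Z - Real.log N) - ε * Q := by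
      have : 0 ≤ 1 - ε := sub_nonneg.2 hε1
      gcongr
    _ ≤ -ε * Q := by linarith

end Weights

/-- Key drift bound in the proof of Theorem 1: if `ε ∈ (0,1/2)` and `(q_i)` is a strictly
positive probability vector with `ρ_k = (1-2ε) φ̂_k ∑_{i : k ∈ S_i} q_i` for all `k`, then
for all states `x` except finitely many, `G(x) ≤ -ε ∑_i q_i log w̃_i(x)`. -/
theorem key_drift_bound
    {K N : ℕ} (hK : 0 < K) (hN : 0 < N)
    (conflict : Fin K → Fin K → Prop)
    (hsymm : ∀ k l, conflict k l → conflict l k)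
    (Sched : Fin N → Finset (Fin K))
    (hfeas : ∀ i, Feasible conflict (Sched i))
    (hinj : Function.Injective Sched)
    (hsurj : ∀ S : Finset (Fin K), Feasible conflict S → ∃ i, Sched i = S)
    (hS0 : Sched ⟨0, hN⟩ = ∅)
    (α φhat : Fin K → ℝ) (hα : ∀ k, 0 < α k) (hφ : ∀ k, 0 < φhat k)
    (ε : ℝ) (hε0 : 0 < ε) (hε1 : ε < 1 / 2)
    (q : Fin N → ℝ) (hq : ∀ i, 0 < q i) (hq1 : (∑ i, q i) = 1)
    (ρ : Fin K → ℝ) (hρ : ∀ k, 0 < ρ k)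
    (hrep : ∀ k, ρ k = (1 - 2 * ε) * φhat k *
      ∑ i ∈ Finset.univ.filter (fun i => k ∈ Sched i), q i) :
    ∃ A : Set (Fin K → ℕ), A.Finite ∧ ∀ x ∉ A,
      G Sched α φhat ρ x ≤ -ε * ∑ i, q i * Real.log (restWeight Sched α x i) := by
  have hdrift := key_drift_bound_general (isLowerSet_range_of_feasible hfeas hsurj)
    (fun k ↦ (hsurj {k} (feasible_singleton conflict k)).imp fun _ hi ↦ by simp [hi])
    hα (fun k ↦ (hφ k).ne') hε0 (by linarith) (fun i ↦ (hq i).le) hq1 hrep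
  exact ⟨_, hdrift, fun _ ↦ not_not.1⟩

end FlowCSMA
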